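/- Let λ > 0, P > 0, r₀ > 0, N₀ ≥ 0 and β > 0 be real. Let H be an exponential random variable with rate 1 and I a nonnegative real random variable independent of H whose Laplace transform satisfies E[e^{−z I}] = exp{ −πλ √(zP) · arctan( √(zP) / r₀² ) } for all z > 0. Let Υ = P·H·r₀^{−4} / (I + N₀) and erfc(x) = (2/√π) ∫_x^∞ e^{−t²} dt. Then E[ erfc( √(β Υ) ) ] = 1 − (1/√π) ∫_0^∞ z^{−1/2} exp{ −z(1 + N₀ r₀⁴/(P β)) − πλ r₀² √(z/β) arctan(√(z/β)) } dz, and E[ erfc²( √(β Υ) ) ] = 1 − (2/√π) ∫_0^∞ z^{−1/2} erfc(√z) exp{ −z(1 + N₀ r₀⁴/(P β)) − πλ r₀² √(z/β) arctan(√(z/β)) } dz. -/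

import Mathlib

open MeasureTheory ProbabilityTheory Real

/-- The complementary error function `erfc x = (2/√π) ∫_x^∞ e^{−t²} dt`. -/
noncomputable def erfc (x : ℝ) : ℝ :=
  (2 / Real.sqrt π) * ∫ t in Set.Ioi x, Real.exp (-t ^ 2)

/-!
Up to a constant, the SINR is a quotient `H / Y` with `Y = c (I + N₀)`, so its tail is a Laplace
transform: conditioning on `Y` gives `P(z < H / Y) = E[e^{-zY}]`. Integrating by parts,
`E[F(H / Y)] = F(0) + ∫₀^∞ F'(z) P(z < H / Y) dz`, and for `F(x) = erfc(√x)ⁿ` the derivative is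
`-(n / √π) z^{-1/2} erfc(√z)^{n-1} e^{-z}`; the two identities are the cases `n = 1` and `n = 2`.
When `N₀ = 0` the denominator is still almost surely positive, since
`P(I ≤ 0) ≤ E[e^{-zI}] → 0` as `z → ∞`.
-/

section Erfc

lemma integrable_exp_neg_sq : Integrable fun t : ℝ => exp (-t ^ 2) := by
  simpa using integrable_exp_neg_mul_sq one_pos

lemma erfc_zero : erfc 0 = 1 := by
  have half_gaussian : ∫ t in Set.Ioi (0 : ℝ), exp (-t ^ 2) = √π / 2 := by
    simpa using integral_gaussian_Ioi 1
  rw [erfc, half_gaussian]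
  field_simp

lemma erfc_nonneg (x : ℝ) : 0 ≤ erfc x :=
  mul_nonneg (by positivity) (integral_nonneg fun _ => (exp_pos _).le)

lemma erfc_eq_one_sub (x : ℝ) : erfc x = 1 - 2 / √π * ∫ t in (0 : ℝ)..x, exp (-t ^ 2) := by
  have split := intervalIntegral.integral_interval_add_Ioi (a := 0) (b := x)
    integrable_exp_neg_sq.integrableOn integrable_exp_neg_sq.integrableOn
  rw [← erfc_zero, erfc, erfc, ← split]
  ring

lemma hasDerivAt_erfc (x : ℝ) : HasDerivAt erfc (-(2 / √π * exp (-x ^ 2))) x := by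
  have hc : Continuous fun t : ℝ => exp (-t ^ 2) := by fun_prop
  rw [funext erfc_eq_one_sub]
  exact ((hc.integral_hasStrictDerivAt 0 x).hasDerivAt.const_mul _).const_sub 1

lemma continuous_erfc : Continuous erfc :=
  continuous_iff_continuousAt.mpr fun x => (hasDerivAt_erfc x).continuousAt

lemma antitone_erfc : Antitone erfc :=
  antitone_of_hasDerivAt_nonpos hasDerivAt_erfc fun _ => neg_nonpos.mpr (by positivity)

lemma erfc_le_one {x : ℝ} (hx : 0 ≤ x) : erfc x ≤ 1 :=
  erfc_zero ▸ antitone_erfc hx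

lemma hasDerivAt_erfc_sqrt {x : ℝ} (hx : 0 < x) :
    HasDerivAt (fun x => erfc √x) (-(1 / √π * (x ^ (-(1 / 2) : ℝ) * exp (-x)))) x := by
  refine ((hasDerivAt_erfc √x).comp x (hasDerivAt_sqrt hx.ne')).congr_deriv ?_
  rw [sq_sqrt hx.le, rpow_neg hx.le, ← sqrt_eq_rpow]
  field_simp

lemma hasDerivAt_erfc_sqrt_pow (n : ℕ) {x : ℝ} (hx : 0 < x) :
    HasDerivAt (fun x => erfc √x ^ n)
      (-(n / √π * (x ^ (-(1 / 2) : ℝ) * erfc √x ^ (n - 1) * exp (-x)))) x :=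
  ((hasDerivAt_erfc_sqrt hx).pow n).congr_deriv (by ring)

end Erfc

section TailFormula

variable {Ω : Type*} [MeasurableSpace Ω] {μ : Measure Ω} {X : Ω → ℝ}

lemma integral_comp_eq_integral_deriv_mul_measureReal_lt [IsFiniteMeasure μ] {G g : ℝ → ℝ}
    (hX : AEMeasurable X μ) (hX0 : 0 ≤ᵐ[μ] X) (hGX : AEStronglyMeasurable (fun ω => G (X ω)) μ)
    (hG : ContinuousOn G (Set.Ici 0)) (hG0 : G 0 = 0)
    (hderiv : ∀ x, 0 < x → HasDerivAt G (g x) x) (hg : ∀ x, 0 < x → 0 ≤ g x) :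
    ∫ ω, G (X ω) ∂μ = ∫ z in Set.Ioi (0 : ℝ), g z * μ.real {ω | z < X ω} := by
  have hg_int {x : ℝ} (hx : 0 ≤ x) : IntervalIntegrable g volume 0 x :=
    (intervalIntegrable_iff_integrableOn_Ioc_of_le hx).mpr <|
      intervalIntegral.integrableOn_deriv_of_nonneg (hG.mono Set.Icc_subset_Ici_self)
        (fun y hy => hderiv y hy.1) fun y hy => hg y hy.1
  have hG_eq {x : ℝ} (hx : 0 ≤ x) : ∫ z in (0 : ℝ)..x, g z = G x := by
    rw [intervalIntegral.integral_eq_sub_of_hasDerivAt_of_le hx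
      (hG.mono Set.Icc_subset_Ici_self) (fun y hy => hderiv y hy.1) (hg_int hx), hG0, sub_zero]
  have hG_nonneg {x : ℝ} (hx : 0 ≤ x) : 0 ≤ G x := by
    rw [← hG_eq hx, intervalIntegral.integral_of_le hx]
    exact setIntegral_nonneg measurableSet_Ioc fun y hy => hg y hy.1
  have hg_nonneg : ∀ᵐ z ∂volume.restrict (Set.Ioi 0), 0 ≤ g z :=
    (ae_restrict_mem measurableSet_Ioi).mono hg
  have hg_meas : AEStronglyMeasurable g (volume.restrict (Set.Ioi 0)) :=
    (aestronglyMeasurable_deriv G _).congr <|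
      (ae_restrict_mem measurableSet_Ioi).mono fun z hz => (hderiv z hz).deriv
  have tail_meas : Measurable fun z => μ.real {ω | z < X ω} :=
    Antitone.measurable fun _ _ hst => measureReal_mono fun _ h => lt_of_le_of_lt hst h
  rw [integral_eq_lintegral_of_nonneg_ae (hX0.mono fun _ => hG_nonneg) hGX,
    integral_eq_lintegral_of_nonneg_ae (hg_nonneg.mono fun _ h => mul_nonneg h measureReal_nonneg)
      (hg_meas.mul tail_meas.aestronglyMeasurable)]
  congr 1
  calc ∫⁻ ω, ENNReal.ofReal (G (X ω)) ∂μ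
      = ∫⁻ ω, ENNReal.ofReal (∫ z in (0 : ℝ)..X ω, g z) ∂μ :=
        lintegral_congr_ae <| hX0.mono fun ω h => by simp only [hG_eq h]
    _ = ∫⁻ z in Set.Ioi 0, μ {ω | z < X ω} * ENNReal.ofReal (g z) :=
        lintegral_comp_eq_lintegral_meas_lt_mul μ hX0 hX (fun _ h => hg_int h.le) hg_nonneg
    _ = ∫⁻ z in Set.Ioi 0, ENNReal.ofReal (g z * μ.real {ω | z < X ω}) :=
        lintegral_congr_ae <| by
          filter_upwards [hg_nonneg] with z h
          rw [ENNReal.ofReal_mul h, ofReal_measureReal, mul_comm]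

lemma integrable_erfc_sqrt_pow [IsFiniteMeasure μ] (hX : AEMeasurable X μ) (n : ℕ) :
    Integrable (fun ω => erfc √(X ω) ^ n) μ := by
  have hmeas : Measurable fun x => erfc √x ^ n :=
    ((continuous_erfc.comp continuous_sqrt).pow n).measurable
  refine .of_bound (hmeas.comp_aemeasurable hX).aestronglyMeasurable 1 (.of_forall fun ω => ?_)
  rw [norm_of_nonneg (pow_nonneg (erfc_nonneg _) n)]
  exact pow_le_one₀ (erfc_nonneg _) (erfc_le_one (sqrt_nonneg _))

lemma integral_erfc_sqrt_pow [IsProbabilityMeasure μ] (hX : AEMeasurable X μ) (hX0 : 0 ≤ᵐ[μ] X)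
    (n : ℕ) :
    ∫ ω, erfc √(X ω) ^ n ∂μ = 1 - n / √π * ∫ z in Set.Ioi (0 : ℝ),
      z ^ (-(1 / 2) : ℝ) * erfc √z ^ (n - 1) * exp (-z) * μ.real {ω | z < X ω} := by
  have hint := integrable_erfc_sqrt_pow hX n
  have tail := integral_comp_eq_integral_deriv_mul_measureReal_lt
    (G := fun x => 1 - erfc √x ^ n) hX hX0
    (aestronglyMeasurable_const.sub hint.aestronglyMeasurable)
    (by have := continuous_erfc; fun_prop) (by simp [erfc_zero])
    (fun x hx => (hasDerivAt_erfc_sqrt_pow n hx).const_sub 1)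
    (fun x hx => by have := erfc_nonneg √x; rw [neg_neg]; positivity)
  rw [integral_sub (integrable_const 1) hint, integral_const, probReal_univ, one_smul] at tail
  rw [← integral_const_mul, eq_sub_iff_add_eq', ← eq_sub_iff_add_eq, tail]
  simp only [neg_neg, mul_assoc]

end TailFormula

section ExponentialTail

variable {Ω : Type*} [MeasurableSpace Ω] {μ : Measure Ω} {H Y : Ω → ℝ} {r : ℝ}

lemma expMeasure_Ioi (hr : 0 < r) {a : ℝ} (ha : 0 ≤ a) :
    expMeasure r (Set.Ioi a) = ENNReal.ofReal (exp (-(r * a))) := by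
  have := isProbabilityMeasure_expMeasure hr
  have hle : exp (-(r * a)) ≤ 1 := exp_le_one_iff.mpr (neg_nonpos.mpr (by positivity))
  rw [← Set.compl_Iic, prob_compl_eq_one_sub measurableSet_Iic, ← ofReal_cdf,
    cdf_expMeasure_eq hr, if_pos ha, ← ENNReal.ofReal_one,
    ← ENNReal.ofReal_sub _ (sub_nonneg.mpr hle), sub_sub_cancel]

lemma ae_pos_expMeasure (hr : 0 < r) : ∀ᵐ x ∂expMeasure r, 0 < x := by
  have := isProbabilityMeasure_expMeasure hr
  exact (mem_ae_iff_prob_eq_one measurableSet_Ioi).mpr (by simp [expMeasure_Ioi hr le_rfl])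

lemma measureReal_lt_eq_mgf_of_hasLaw_expMeasure [IsFiniteMeasure μ] (hr : 0 < r)
    (hH : HasLaw H (expMeasure r) μ) (hY : AEMeasurable Y μ) (hY0 : 0 ≤ᵐ[μ] Y)
    (hindep : IndepFun H Y μ) : μ.real {ω | Y ω < H ω} = mgf Y μ (-r) := by
  have := isProbabilityMeasure_expMeasure hr
  have hS : MeasurableSet {p : ℝ × ℝ | p.2 < p.1} := measurableSet_lt measurable_snd measurable_fst
  have joint : HasLaw (fun ω => (H ω, Y ω)) ((expMeasure r).prod (μ.map Y)) μ :=
    (indepFun_iff_hasLaw_prodMk_prod hH ⟨hY, rfl⟩).mp hindep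
  have conditioned : μ {ω | Y ω < H ω} = ∫⁻ ω, ENNReal.ofReal (exp (-r * Y ω)) ∂μ :=
    calc μ {ω | Y ω < H ω}
        = ((expMeasure r).prod (μ.map Y)) {p | p.2 < p.1} := joint.measure_eq hS
      _ = ∫⁻ ω, expMeasure r (Set.Ioi (Y ω)) ∂μ := by
        rw [Measure.prod_apply_symm hS,
          lintegral_map' (measurable_measure_prodMk_right hS).aemeasurable hY]
        rfl
      _ = ∫⁻ ω, ENNReal.ofReal (exp (-r * Y ω)) ∂μ :=
        lintegral_congr_ae <| hY0.mono fun ω h => by simp only [expMeasure_Ioi hr h, neg_mul]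
  rw [measureReal_def, conditioned, mgf, integral_eq_lintegral_of_nonneg_ae
    (.of_forall fun _ => (exp_pos _).le) (by fun_prop)]

lemma measureReal_lt_div_eq_mgf_of_hasLaw_expMeasure [IsFiniteMeasure μ] (hr : 0 < r)
    (hH : HasLaw H (expMeasure r) μ) (hY : AEMeasurable Y μ) (hY0 : ∀ᵐ ω ∂μ, 0 < Y ω)
    (hindep : IndepFun H Y μ) {z : ℝ} (hz : 0 ≤ z) :
    μ.real {ω | z < H ω / Y ω} = mgf Y μ (-(r * z)) :=
  calc μ.real {ω | z < H ω / Y ω}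
      = μ.real {ω | z * Y ω < H ω} :=
        measureReal_congr <| hY0.mono fun ω h => propext (lt_div_iff₀ h)
    _ = mgf (fun ω => z * Y ω) μ (-r) :=
        measureReal_lt_eq_mgf_of_hasLaw_expMeasure hr hH (hY.const_mul z)
          (hY0.mono fun ω h => mul_nonneg hz h.le)
          (hindep.comp measurable_id (measurable_const_mul z))
    _ = mgf Y μ (-(r * z)) := by rw [mgf_const_mul, mul_neg, mul_comm]

lemma integral_erfc_sqrt_div_pow [IsProbabilityMeasure μ] (hr : 0 < r)
    (hH : HasLaw H (expMeasure r) μ) (hY : AEMeasurable Y μ) (hY0 : ∀ᵐ ω ∂μ, 0 < Y ω)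
    (hindep : IndepFun H Y μ) (n : ℕ) :
    ∫ ω, erfc √(H ω / Y ω) ^ n ∂μ = 1 - n / √π * ∫ z in Set.Ioi (0 : ℝ),
      z ^ (-(1 / 2) : ℝ) * erfc √z ^ (n - 1) * exp (-z) * mgf Y μ (-(r * z)) := by
  have hH0 : ∀ᵐ ω ∂μ, 0 < H ω := (hH.ae_iff (by fun_prop)).mpr (ae_pos_expMeasure hr)
  have hquot0 : 0 ≤ᵐ[μ] fun ω => H ω / Y ω := by
    filter_upwards [hH0, hY0] with ω h h' using (div_pos h h').le
  rw [integral_erfc_sqrt_pow (X := fun ω => H ω / Y ω) (hH.aemeasurable.div hY) hquot0 n]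
  congr 2
  refine setIntegral_congr_fun measurableSet_Ioi fun z hz => ?_
  simp only [measureReal_lt_div_eq_mgf_of_hasLaw_expMeasure hr hH hY hY0 hindep (le_of_lt hz)]

end ExponentialTail

section Interference

open Filter Topology

lemma ae_pos_of_tendsto_mgf_atBot {Ω : Type*} [MeasurableSpace Ω] {μ : Measure Ω}
    [IsFiniteMeasure μ] {X : Ω → ℝ} (hint : ∀ᶠ t in atBot, Integrable (fun ω => exp (t * X ω)) μ)
    (hlim : Tendsto (mgf X μ) atBot (𝓝 0)) : ∀ᵐ ω ∂μ, 0 < X ω := by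
  have chernoff : ∀ᶠ t in atBot, μ.real {ω | X ω ≤ 0} ≤ mgf X μ t := by
    filter_upwards [hint, eventually_le_atBot 0] with t ht ht0
    simpa using measure_le_le_exp_mul_mgf 0 ht0 ht
  have null : μ.real {ω | X ω ≤ 0} = 0 :=
    (ge_of_tendsto hlim chernoff).antisymm measureReal_nonneg
  simpa [ae_iff, measureReal_eq_zero_iff] using null

/-- Laplace transform at `z` of the interference power in a Poisson network of intensity `lam` with
transmit power `P`, path-loss exponent `4` and Rayleigh fading, when every interferer is farther
away than the serving base station at distance `r₀`. -/
noncomputable def interferenceLaplace (lam P r₀ z : ℝ) : ℝ :=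
  exp (-(π * lam * √(z * P) * arctan (√(z * P) / r₀ ^ 2)))

variable {Ω : Type*} [MeasurableSpace Ω] {μ : Measure Ω} {I : Ω → ℝ} {lam P r₀ : ℝ}

lemma tendsto_interferenceLaplace_atTop (hlam : 0 < lam) (hP : 0 < P) (hr₀ : r₀ ≠ 0) :
    Tendsto (interferenceLaplace lam P r₀) atTop (𝓝 0) := by
  have hsqrt : Tendsto (fun z => √(z * P)) atTop atTop :=
    tendsto_sqrt_atTop.comp (tendsto_id.atTop_mul_const hP)
  have harctan : Tendsto (fun z => arctan (√(z * P) / r₀ ^ 2)) atTop (𝓝 (π / 2)) :=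
    (tendsto_arctan_atTop.mono_right nhdsWithin_le_nhds).comp
      (hsqrt.atTop_div_const (by positivity))
  exact tendsto_exp_neg_atTop_nhds_zero.comp <|
    (hsqrt.const_mul_atTop (mul_pos pi_pos hlam)).atTop_mul_pos pi_div_two_pos harctan

lemma interferenceLaplace_rescale (hP : P ≠ 0) (hr₀ : r₀ ≠ 0) (lam β z : ℝ) :
    interferenceLaplace lam P r₀ (r₀ ^ 4 / (P * β) * z) =
      exp (-(π * lam * r₀ ^ 2 * √(z / β) * arctan √(z / β))) := by
  have hsqrt : √(r₀ ^ 4 / (P * β) * z * P) = r₀ ^ 2 * √(z / β) := by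
    rw [show r₀ ^ 4 / (P * β) * z * P = (r₀ ^ 2) ^ 2 * (z / β) by field_simp,
      sqrt_mul (by positivity), sqrt_sq (by positivity)]
  rw [interferenceLaplace, hsqrt, mul_div_cancel_left₀ _ (pow_ne_zero 2 hr₀), ← mul_assoc]

lemma ae_pos_of_mgf_eq_interferenceLaplace [IsFiniteMeasure μ] (hlam : 0 < lam) (hP : 0 < P)
    (hr₀ : r₀ ≠ 0) (hI : ∀ z, 0 < z → mgf I μ (-z) = interferenceLaplace lam P r₀ z) :
    ∀ᵐ ω ∂μ, 0 < I ω := by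
  have hmgf : ∀ᶠ t in atBot, interferenceLaplace lam P r₀ (-t) = mgf I μ t := by
    filter_upwards [eventually_lt_atBot 0] with t ht
    rw [← hI (-t) (neg_pos.mpr ht), neg_neg]
  refine ae_pos_of_tendsto_mgf_atBot ?_ <| Tendsto.congr' hmgf <|
    (tendsto_interferenceLaplace_atTop hlam hP hr₀).comp tendsto_neg_atBot_atTop
  filter_upwards [hmgf] with t ht
  exact .of_integral_ne_zero <| ht.symm.trans_ne (exp_pos _).ne'

lemma mgf_normalized_interference_add_noise {β z : ℝ} (hP : P ≠ 0) (hr₀ : r₀ ≠ 0)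
    (hI : mgf I μ (-(r₀ ^ 4 / (P * β) * z)) =
      interferenceLaplace lam P r₀ (r₀ ^ 4 / (P * β) * z)) (N₀ : ℝ) :
    mgf (fun ω => r₀ ^ 4 / (P * β) * (I ω + N₀)) μ (-z) =
      exp (-(z * (N₀ * r₀ ^ 4 / (P * β))) - π * lam * r₀ ^ 2 * √(z / β) * arctan √(z / β)) := by
  rw [mgf_const_mul, mgf_add_const, mul_neg, hI, interferenceLaplace_rescale hP hr₀, ← exp_add]
  ring_nf

end Interference

/-- ASEP building blocks in a Poisson cellular network with `η = 4`: with `H` unit-rate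
exponential, `I ≥ 0` independent of `H` with Laplace transform
`E[e^{−zI}] = exp{−πλ√(zP) arctan(√(zP)/r₀²)}`, and SINR `Υ = P H r₀^{−4}/(I + N₀)`,
both `E[erfc(√(βΥ))]` and `E[erfc²(√(βΥ))]` are given by explicit integrals. -/
theorem stmt12 {Ω : Type*} [MeasurableSpace Ω] (μ : Measure Ω) [IsProbabilityMeasure μ]
    (lam P r₀ N₀ β : ℝ) (hlam : 0 < lam) (hP : 0 < P) (hr₀ : 0 < r₀) (hN₀ : 0 ≤ N₀)
    (hβ : 0 < β)
    (H I : Ω → ℝ) (hH : Measurable H) (hI : Measurable I)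
    (hHexp : μ.map H = expMeasure 1)
    (hInonneg : ∀ ω, 0 ≤ I ω)
    (hindep : IndepFun H I μ)
    (hLT : ∀ z : ℝ, 0 < z → ∫ ω, Real.exp (-z * I ω) ∂μ =
      Real.exp (-(π * lam * Real.sqrt (z * P) * Real.arctan (Real.sqrt (z * P) / r₀ ^ 2))))
    (Υ : Ω → ℝ) (hΥ : ∀ ω, Υ ω = P * H ω * r₀ ^ (-4 : ℤ) / (I ω + N₀)) :
    (∫ ω, erfc (Real.sqrt (β * Υ ω)) ∂μ =
      1 - (1 / Real.sqrt π) * ∫ z in Set.Ioi (0:ℝ),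
        z ^ (-(1/2) : ℝ) *
          Real.exp (-(z * (1 + N₀ * r₀ ^ 4 / (P * β))) -
            π * lam * r₀ ^ 2 * Real.sqrt (z / β) * Real.arctan (Real.sqrt (z / β)))) ∧
    (∫ ω, (erfc (Real.sqrt (β * Υ ω))) ^ 2 ∂μ =
      1 - (2 / Real.sqrt π) * ∫ z in Set.Ioi (0:ℝ),
        z ^ (-(1/2) : ℝ) * erfc (Real.sqrt z) *
          Real.exp (-(z * (1 + N₀ * r₀ ^ 4 / (P * β))) -
            π * lam * r₀ ^ 2 * Real.sqrt (z / β) * Real.arctan (Real.sqrt (z / β)))) := by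
  set Y : Ω → ℝ := fun ω => r₀ ^ 4 / (P * β) * (I ω + N₀) with hY
  -- Where `I ω + N₀ = 0`, both quotients are `0`.
  have hquot ω : β * Υ ω = H ω / Y ω := by
    simp only [hΥ, hY, div_eq_mul_inv, mul_inv, inv_inv, zpow_neg]
    norm_cast
    ring
  have hYpos : ∀ᵐ ω ∂μ, 0 < Y ω :=
    (ae_pos_of_mgf_eq_interferenceLaplace hlam hP hr₀.ne' hLT).mono fun ω hω => by positivity
  have hindepY : IndepFun H Y μ :=
    hindep.comp (ψ := fun y => r₀ ^ 4 / (P * β) * (y + N₀)) measurable_id (by fun_prop)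
  have asep (n : ℕ) : ∫ ω, erfc √(β * Υ ω) ^ n ∂μ = 1 - n / √π * ∫ z in Set.Ioi (0 : ℝ),
      z ^ (-(1 / 2) : ℝ) * erfc √z ^ (n - 1) * exp (-(z * (1 + N₀ * r₀ ^ 4 / (P * β))) -
        π * lam * r₀ ^ 2 * √(z / β) * arctan √(z / β)) := by
    simp only [hquot]
    rw [integral_erfc_sqrt_div_pow one_pos ⟨hH.aemeasurable, hHexp⟩ (by fun_prop) hYpos hindepY]
    congr 2
    refine setIntegral_congr_fun measurableSet_Ioi fun z (hz : 0 < z) => ?_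
    have hmgf := mgf_normalized_interference_add_noise hP.ne' hr₀.ne'
      (hLT (r₀ ^ 4 / (P * β) * z) (by positivity)) N₀
    simp only [one_mul]
    rw [hmgf, mul_assoc, ← exp_add]
    ring_nf
  exact ⟨by simpa using asep 1, by simpa using asep 2⟩
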